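/- Let k ≥ 100 and b be integers with 2 ≤ b ≤ k, and let A be a subinterval of [0,1] with μ(A) ≥ 2^{−2^k − k}. Then μ(H_{b,k}(A)) ≤ 2^{−b} · μ(A). -/

import Mathlib

open scoped Classical

/-- `F M N α₁ α₂ x = |#{j : M ≤ j < M+N, α₁ ≤ x_j < α₂} − (α₂ − α₁)·N|`. -/
noncomputable def F (M N : ℕ) (α₁ α₂ : ℝ) (x : ℕ → ℝ) : ℝ :=
  |(((Finset.Ico M (M + N)).filter fun j => α₁ ≤ x j ∧ x j < α₂).card : ℝ) -
    (α₂ - α₁) * N|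

/-- The sequence `({b^j x})_{j ≥ 0}` of fractional parts. -/
noncomputable def bseq (b : ℕ) (x : ℝ) : ℕ → ℝ := fun j => Int.fract ((b : ℝ) ^ j * x)

/-- `N_k^{(b)} = ⌈2^k · log 2 / log b⌉`. -/
noncomputable def Nkb (b k : ℕ) : ℕ := ⌈(2 : ℝ) ^ k * Real.log 2 / Real.log b⌉₊

/-- `n_k^{(b)} = ⌈log₂(N_{k+1}^{(b)} − N_k^{(b)} − 4k)⌉`. -/
noncomputable def nkb (b k : ℕ) : ℕ :=
  ⌈Real.logb 2 ((Nkb b (k + 1) : ℝ) - Nkb b k - 4 * k)⌉₊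

/-- `T_b(k) = ⌈n_k^{(b)} · log 2 / (2 log b)⌉`. -/
noncomputable def Tbk (b k : ℕ) : ℕ :=
  ⌈(nkb b k : ℝ) * Real.log 2 / (2 * Real.log b)⌉₊

/-- The exceptional set `H_{b,k}(A)`. -/
noncomputable def Hset (b k : ℕ) (A : Set ℝ) : Set ℝ :=
  ⋃ (h : ℕ) (_ : 1 ≤ h) (_ : h ≤ Tbk b k) (a : ℕ) (_ : a < b ^ h)
    (ℓ : ℕ) (_ : nkb b k ≤ 2 * ℓ) (_ : ℓ ≤ nkb b k)
    (m : ℕ) (_ : Nkb b k + 4 * k + m * 2 ^ ℓ + 2 ^ (ℓ - 1) ≤ Nkb b (k + 1)),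
    {x ∈ A | 46 * (2 : ℝ) ^ (((ℓ : ℝ) - 1) / 2) * (h : ℝ) ^ (-(3 / 2) : ℝ) *
        Real.sqrt ((nkb b k : ℝ) - ℓ + 1) <
      F (Nkb b k + 4 * k + m * 2 ^ ℓ) (2 ^ (ℓ - 1))
        ((a : ℝ) / (b : ℝ) ^ h) (((a : ℝ) + 1) / (b : ℝ) ^ h) (bseq b x)}

/-! The count in `F` splits according to the residue class of `j` modulo `h`. Within one class it
counts a digit among consecutive base-`b ^ h` digits, and on an interval whose length is a multiple
of `b ^ (-(N_k + 4 k))` these digits are exactly independent and uniform, because the interval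
consists of whole periods. Their moment generating function therefore factorises, and Bernstein's
inequality bounds the proportion of points violating one condition by
`2 ^ (-(b + 2 h + 2 (n_k - ℓ + 1))) * b ^ (-h)` up to the factor `2 h`, which is small enough for a
union bound over all `h`, `a`, `ℓ`, `m`. An interval `A` of length at least `b ^ (-(N_k + 4 k))` is
covered by such an interval of at most twice its length. -/

open MeasureTheory ProbabilityTheory Set

section Preliminaries

lemma measureReal_le_abs_le_exp_mul_mgf {Ω : Type*} [MeasurableSpace Ω] {μ : Measure Ω}
    [IsFiniteMeasure μ] {X : Ω → ℝ} {t : ℝ} (y : ℝ) (ht : 0 ≤ t)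
    (hpos : Integrable (fun ω => Real.exp (t * X ω)) μ)
    (hneg : Integrable (fun ω => Real.exp (-t * X ω)) μ) :
    μ.real {ω | y ≤ |X ω|} ≤ Real.exp (-t * y) * (mgf X μ t + mgf X μ (-t)) := by
  have hunion : {ω | y ≤ |X ω|} = {ω | y ≤ X ω} ∪ {ω | X ω ≤ -y} := by
    ext ω
    simp only [mem_ofPred_eq, mem_union, le_abs, le_neg]
  have hupper := measure_ge_le_exp_mul_mgf y ht hpos
  have hlower := measure_le_le_exp_mul_mgf (-y) (neg_nonpos.2 ht) hneg
  rw [neg_neg, mul_neg, ← neg_mul] at hlower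
  rw [hunion, mul_add]
  exact (measureReal_union_le _ _).trans (add_le_add hupper hlower)

lemma intervalIntegral_comp_mul_left_of_periodic {f : ℝ → ℝ} (hf : Function.Periodic f 1)
    (hint : IntervalIntegrable f volume 0 1) {P u v : ℝ} (hP : P ≠ 0) {n : ℤ}
    (hn : P * (v - u) = n) :
    ∫ x in u..v, f (P * x) = (v - u) * ∫ y in (0 : ℝ)..1, f y := by
  have hend : P * v = P * u + n • (1 : ℝ) := by
    rw [zsmul_one, ← hn]
    ring
  have hperiod : ∫ y in P * u..P * u + 1, f y = ∫ y in (0 : ℝ)..1, f y := by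
    simpa only [zero_add] using hf.intervalIntegral_add_eq (P * u) 0
  rw [intervalIntegral.integral_comp_mul_left f hP, hend,
    hf.intervalIntegral_add_zsmul_eq n _ (hf.intervalIntegrable₀ one_ne_zero hint), hperiod,
    zsmul_eq_mul, ← hn, smul_eq_mul, ← mul_assoc, inv_mul_cancel_left₀ hP]

lemma intervalIntegral_indicator_preimage_fract {c d : ℝ} (hc : 0 ≤ c) (hcd : c ≤ d) (hd : d ≤ 1)
    (f : ℝ → ℝ) :
    ∫ y in (0 : ℝ)..1, (Int.fract ⁻¹' Ico c d).indicator f y = ∫ y in c..d, f y := by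
  have hfract : EqOn ((Int.fract ⁻¹' Ico c d).indicator f) ((Ico c d).indicator f) (Ico 0 1) :=
    fun y hy => by simp only [indicator_apply, mem_preimage, Int.fract_eq_self.2 hy]
  rw [intervalIntegral.integral_of_le zero_le_one, intervalIntegral.integral_of_le hcd,
    ← integral_Ico_eq_integral_Ioc, ← integral_Ico_eq_integral_Ioc,
    setIntegral_congr_fun measurableSet_Ico hfract, setIntegral_indicator measurableSet_Ico,
    inter_eq_right.2 (Ico_subset_Ico hc hd)]

lemma sum_range_eq_sum_residues {M : Type*} [AddCommMonoid M] {h : ℕ} (hh : 0 < h) (L : ℕ)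
    (f : ℕ → M) :
    ∑ j ∈ Finset.range L, f j =
      ∑ r ∈ Finset.range h, ∑ i ∈ Finset.range ((L - r) ⌈/⌉ h), f (r + i * h) := by
  have hlt (r i : ℕ) : i < (L - r) ⌈/⌉ h ↔ r + i * h < L := by
    rw [← not_le, ceilDiv_le_iff_le_mul hh, mul_comm]
    omega
  rw [Finset.sum_sigma']
  refine Finset.sum_nbij' (fun j => ⟨j % h, j / h⟩) (fun p => p.1 + p.2 * h) ?_ ?_ ?_ ?_ ?_
  · intro j hj
    simp only [Finset.mem_range, Finset.mem_sigma, hlt, Nat.mod_add_div'] at hj ⊢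
    exact ⟨Nat.mod_lt _ hh, hj⟩
  · rintro ⟨r, i⟩ hri
    simp only [Finset.mem_range, Finset.mem_sigma, hlt] at hri ⊢
    exact hri.2
  · exact fun j _ => Nat.mod_add_div' j h
  · rintro ⟨r, i⟩ hri
    simp only [Finset.mem_range, Finset.mem_sigma] at hri
    simp only [Nat.add_mul_mod_self_right, Nat.mod_eq_of_lt hri.1, Nat.add_mul_div_right _ _ hh,
      Nat.div_eq_of_lt hri.1, zero_add]
  · exact fun j _ => by rw [Nat.mod_add_div']

lemma natCast_ceilDiv_le {m h : ℕ} (hh : 0 < h) : ((m ⌈/⌉ h : ℕ) : ℝ) ≤ (m + h) / h := by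
  rw [Nat.ceilDiv_eq_add_pred_div]
  refine Nat.cast_div_le.trans ?_
  gcongr
  exact_mod_cast Nat.sub_le (m + h) 1

/-- The minimiser of `v t² - t y` on `[0, 1]` is `min (y / (2 v)) 1`. -/
lemma exists_mem_Icc_quadratic_le {v y : ℝ} (hv : 0 < v) (hy : 0 ≤ y) :
    ∃ t ∈ Icc (0 : ℝ) 1, v * t ^ 2 - t * y ≤ -min (y ^ 2 / (4 * v)) (y / 2) := by
  rcases le_total y (2 * v) with hyv | hyv
  · refine ⟨y / (2 * v), ⟨by positivity, (div_le_one (by positivity)).2 hyv⟩, ?_⟩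
    have hmin : v * (y / (2 * v)) ^ 2 - y / (2 * v) * y = -(y ^ 2 / (4 * v)) := by
      field_simp
      ring
    rw [hmin]
    exact neg_le_neg (min_le_left _ _)
  · refine ⟨1, ⟨zero_le_one, le_rfl⟩, ?_⟩
    linarith [min_le_right (y ^ 2 / (4 * v)) (y / 2)]

lemma exists_subset_Icc_of_ordConnected {A : Set ℝ} (hA : A.OrdConnected)
    (hfin : volume A ≠ ⊤) : ∃ u, A ⊆ Icc u (u + volume.real A) := by
  rcases A.eq_empty_or_nonempty with rfl | hne
  · exact ⟨0, empty_subset _⟩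
  have hsub {x y : ℝ} (hx : x ∈ A) (hy : y ∈ A) : x - volume.real A ≤ y := by
    have hIcc := measureReal_mono (μ := volume) (hA.out hy hx) hfin
    rw [Real.volume_real_Icc] at hIcc
    linarith [le_max_left (x - y) 0]
  obtain ⟨x₀, hx₀⟩ := hne
  have hbdd : BddBelow A := ⟨_, fun y hy => hsub hx₀ hy⟩
  refine ⟨sInf A, fun x hx => ⟨csInf_le hbdd hx, ?_⟩⟩
  exact sub_le_iff_le_add.1 (le_csInf ⟨x₀, hx₀⟩ fun y hy => hsub hx hy)

end Preliminaries

section Deviation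

variable (B a : ℕ)

/-- The centred indicator of the event that the leading base-`B` digit of the fractional part of
`y` is `a`. -/
noncomputable def digitDeviation (y : ℝ) : ℝ :=
  (Int.fract ⁻¹' Ico ((a : ℝ) / B) ((a + 1) / B)).indicator 1 y - 1 / B

/-- The number of occurrences of the digit `a` among the first `K` base-`B` digits of the
fractional part of `y`, minus its mean `K / B`. -/
noncomputable def deviationSum (K : ℕ) (y : ℝ) : ℝ :=
  ∑ i ∈ Finset.range K, digitDeviation B a ((B : ℝ) ^ i * y)

lemma measurable_digitDeviation : Measurable (digitDeviation B a) :=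
  (measurable_one.indicator (measurable_fract measurableSet_Ico)).sub_const _

lemma periodic_digitDeviation : Function.Periodic (digitDeviation B a) 1 := fun y => by
  simp only [digitDeviation, indicator_apply, mem_preimage, Int.fract_add_one, Pi.one_apply]

lemma abs_digitDeviation_le_one (y : ℝ) : |digitDeviation B a y| ≤ 1 := by
  have hinv : (1 : ℝ) / B ≤ 1 := by
    simpa only [one_div] using Nat.cast_inv_le_one B
  rw [digitDeviation, abs_le, indicator_apply, Pi.one_apply]
  split_ifs <;> constructor <;> linarith [show (0 : ℝ) ≤ 1 / B by positivity]

lemma exp_mul_digitDeviation (t y : ℝ) :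
    Real.exp (t * digitDeviation B a y) = Real.exp (-t / B) *
      (1 + (Real.exp t - 1) * (Int.fract ⁻¹' Ico ((a : ℝ) / B) ((a + 1) / B)).indicator 1 y) := by
  rw [digitDeviation, indicator_apply, Pi.one_apply]
  split_ifs
  · rw [mul_one, add_sub_cancel, ← Real.exp_add]
    ring_nf
  · ring_nf

lemma measurable_deviationSum (K : ℕ) : Measurable (deviationSum B a K) :=
  Finset.measurable_fun_sum _ fun _ _ =>
    (measurable_digitDeviation B a).comp (measurable_const_mul _)

lemma periodic_deviationSum (K : ℕ) : Function.Periodic (deviationSum B a K) 1 := fun y => by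
  refine Finset.sum_congr rfl fun i _ => ?_
  have h := (periodic_digitDeviation B a).nat_mul (B ^ i) ((B : ℝ) ^ i * y)
  rwa [Nat.cast_pow, mul_one, ← mul_add_one] at h

lemma abs_deviationSum_le (K : ℕ) (y : ℝ) : |deviationSum B a K y| ≤ K := by
  refine (Finset.abs_sum_le_sum_abs _ _).trans ?_
  refine (Finset.sum_le_card_nsmul _ _ 1 fun i _ => abs_digitDeviation_le_one B a _).trans ?_
  rw [Finset.card_range, nsmul_one]

lemma deviationSum_succ (K : ℕ) (y : ℝ) :
    deviationSum B a (K + 1) y = digitDeviation B a y + deviationSum B a K (B * y) := by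
  rw [deviationSum, Finset.sum_range_succ', pow_zero, one_mul, add_comm]
  simp only [deviationSum, pow_succ, mul_assoc]

lemma integrable_exp_mul_deviationSum {μ : Measure ℝ} [IsFiniteMeasure μ] (K : ℕ) (P t : ℝ) :
    Integrable (fun x => Real.exp (t * deviationSum B a K (P * x))) μ :=
  integrable_exp_mul_of_mem_Icc
    ((measurable_deviationSum B a K).comp (measurable_const_mul P)).aemeasurable
    (ae_of_all _ fun x => abs_le.1 (abs_deviationSum_le B a K (P * x)))

lemma intervalIntegrable_exp_mul_deviationSum (K : ℕ) (P t u v : ℝ) :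
    IntervalIntegrable (fun x => Real.exp (t * deviationSum B a K (P * x))) volume u v :=
  ⟨integrable_exp_mul_deviationSum B a K P t, integrable_exp_mul_deviationSum B a K P t⟩

lemma intervalIntegral_exp_mul_deviationSum_comp_mul (K : ℕ) (t : ℝ) {P u v : ℝ} (hP : P ≠ 0)
    {n : ℤ} (hn : P * (v - u) = n) :
    ∫ x in u..v, Real.exp (t * deviationSum B a K (P * x)) =
      (v - u) * ∫ y in (0 : ℝ)..1, Real.exp (t * deviationSum B a K y) := by
  refine intervalIntegral_comp_mul_left_of_periodic
    (f := fun y => Real.exp (t * deviationSum B a K y))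
    ((periodic_deviationSum B a K).comp fun s => Real.exp (t * s)) ?_ hP hn
  simpa only [one_mul] using intervalIntegrable_exp_mul_deviationSum B a K 1 t 0 1

variable {B a}

lemma intervalIntegral_exp_mul_deviationSum_succ (ha : a < B) (K : ℕ) (t : ℝ) :
    ∫ y in (0 : ℝ)..1, Real.exp (t * deviationSum B a (K + 1) y) =
      Real.exp (-t / B) * (1 + (Real.exp t - 1) / B) *
        ∫ y in (0 : ℝ)..1, Real.exp (t * deviationSum B a K y) := by
  have hB : (0 : ℝ) < B := by exact_mod_cast a.zero_le.trans_lt ha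
  set D := Int.fract ⁻¹' Ico ((a : ℝ) / B) ((a + 1) / B)
  set G : ℝ → ℝ := fun y => Real.exp (t * deviationSum B a K (B * y))
  have hsucc (y : ℝ) : Real.exp (t * deviationSum B a (K + 1) y) =
      Real.exp (-t / B) * (G y + (Real.exp t - 1) * D.indicator G y) := by
    have hindicator : D.indicator G y = D.indicator 1 y * G y := by
      rw [← indicator_mul_left]
      simp only [Pi.one_apply, one_mul]
    rw [deviationSum_succ, mul_add, Real.exp_add, exp_mul_digitDeviation, hindicator]
    ring
  have hfull := intervalIntegral_exp_mul_deviationSum_comp_mul B a K t (u := 0) (v := 1) hB.ne'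
    (n := B) (by simp)
  have hcell := intervalIntegral_exp_mul_deviationSum_comp_mul B a K t (u := a / B)
    (v := (a + 1) / B) hB.ne' (n := 1) (by field_simp; simp)
  have hdigit := intervalIntegral_indicator_preimage_fract (c := a / B) (d := (a + 1) / B)
    (by positivity) (by gcongr; linarith) ((div_le_one hB).2 (by exact_mod_cast ha)) G
  have hint := intervalIntegrable_exp_mul_deviationSum B a K B t 0 1
  have hint_digit : IntervalIntegrable (D.indicator G) volume 0 1 :=
    ⟨hint.1.indicator (measurable_fract measurableSet_Ico),
      hint.2.indicator (measurable_fract measurableSet_Ico)⟩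
  simp only [hsucc]
  rw [intervalIntegral.integral_const_mul, intervalIntegral.integral_add hint
    (hint_digit.const_mul _), intervalIntegral.integral_const_mul, hdigit, hcell, hfull]
  ring

/-- The base-`B` digits are independent, each equal to `a` with probability `1 / B`. -/
lemma intervalIntegral_exp_mul_deviationSum (ha : a < B) (K : ℕ) (t : ℝ) :
    ∫ y in (0 : ℝ)..1, Real.exp (t * deviationSum B a K y) =
      (Real.exp (-t / B) * (1 + (Real.exp t - 1) / B)) ^ K := by
  induction K with
  | zero => simp [deviationSum]
  | succ K ih => rw [intervalIntegral_exp_mul_deviationSum_succ ha, ih, pow_succ']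

lemma intervalIntegral_exp_mul_deviationSum_le (ha : a < B) (K : ℕ) {t : ℝ} (ht : |t| ≤ 1) :
    ∫ y in (0 : ℝ)..1, Real.exp (t * deviationSum B a K y) ≤ Real.exp (K * (t ^ 2 / B)) := by
  have hB : (1 : ℝ) ≤ B := by exact_mod_cast Nat.one_le_of_lt ha
  have hexp : Real.exp t - 1 ≤ t + t ^ 2 := by
    linarith [(abs_le.1 (Real.abs_exp_sub_one_sub_id_le ht)).2]
  have hfactor : 1 + (Real.exp t - 1) / B ≤ Real.exp ((t + t ^ 2) / B) := by
    calc 1 + (Real.exp t - 1) / B ≤ (t + t ^ 2) / B + 1 := by rw [add_comm]; gcongr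
      _ ≤ Real.exp ((t + t ^ 2) / B) := Real.add_one_le_exp _
  have hnonneg : 0 ≤ 1 + (Real.exp t - 1) / B := by
    have : 1 - 1 / (B : ℝ) ≤ 1 + (Real.exp t - 1) / B := by
      rw [sub_div]
      linarith [show 0 ≤ Real.exp t / B by positivity]
    linarith [(div_le_one (by positivity)).2 hB]
  rw [intervalIntegral_exp_mul_deviationSum ha, Real.exp_nat_mul]
  gcongr
  calc Real.exp (-t / B) * (1 + (Real.exp t - 1) / B)
      ≤ Real.exp (-t / B) * Real.exp ((t + t ^ 2) / B) := by gcongr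
    _ = Real.exp (t ^ 2 / B) := by rw [← Real.exp_add]; ring_nf

lemma mgf_deviationSum_comp_mul_le (ha : a < B) (K : ℕ) {t : ℝ} (ht : |t| ≤ 1) {P u v : ℝ}
    (hP : P ≠ 0) (huv : u ≤ v) {n : ℤ} (hn : P * (v - u) = n) :
    mgf (fun x => deviationSum B a K (P * x)) (volume.restrict (Icc u v)) t ≤
      (v - u) * Real.exp (K * (t ^ 2 / B)) := by
  rw [mgf, integral_Icc_eq_integral_Ioc, ← intervalIntegral.integral_of_le huv,
    intervalIntegral_exp_mul_deviationSum_comp_mul B a K t hP hn]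
  exact mul_le_mul_of_nonneg_left (intervalIntegral_exp_mul_deviationSum_le ha K ht)
    (sub_nonneg.2 huv)

lemma measureReal_le_abs_deviationSum_le (ha : a < B) (K : ℕ) {t : ℝ} (ht : t ∈ Icc (0 : ℝ) 1)
    {P u v : ℝ} (hP : P ≠ 0) (huv : u ≤ v) {n : ℤ} (hn : P * (v - u) = n) (y : ℝ) :
    (volume.restrict (Icc u v)).real {x | y ≤ |deviationSum B a K (P * x)|} ≤
      2 * (v - u) * Real.exp (K / B * t ^ 2 - t * y) := by
  have ht' : |t| ≤ 1 := by rw [abs_of_nonneg ht.1]; exact ht.2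
  have hpos := mgf_deviationSum_comp_mul_le ha K ht' hP huv hn
  have hneg := mgf_deviationSum_comp_mul_le ha K ((abs_neg t).trans_le ht') hP huv hn
  rw [neg_sq] at hneg
  calc (volume.restrict (Icc u v)).real {x | y ≤ |deviationSum B a K (P * x)|}
      ≤ Real.exp (-t * y) * (_ + _) := measureReal_le_abs_le_exp_mul_mgf y ht.1
        (integrable_exp_mul_deviationSum B a K P t) (integrable_exp_mul_deviationSum B a K P (-t))
    _ ≤ Real.exp (-t * y) * ((v - u) * Real.exp (K * (t ^ 2 / B)) +
          (v - u) * Real.exp (K * (t ^ 2 / B))) := by gcongr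
    _ = 2 * (v - u) * Real.exp (K / B * t ^ 2 - t * y) := by
      rw [show K / B * t ^ 2 - t * y = -t * y + K * (t ^ 2 / B) by ring, Real.exp_add]
      ring

end Deviation

section Blocks

variable {b h a : ℕ}

lemma F_bseq_eq_abs_sum (M L : ℕ) (x : ℝ) :
    F M L (a / (b : ℝ) ^ h) ((a + 1) / (b : ℝ) ^ h) (bseq b x) =
      |∑ j ∈ Finset.range L, digitDeviation (b ^ h) a ((b : ℝ) ^ (M + j) * x)| := by
  have hcount : (((Finset.Ico M (M + L)).filter fun j => a / (b : ℝ) ^ h ≤ bseq b x j ∧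
      bseq b x j < (a + 1) / (b : ℝ) ^ h).card : ℝ) =
      ∑ j ∈ Finset.range L, (Int.fract ⁻¹' Ico ((a : ℝ) / b ^ h) ((a + 1) / b ^ h)).indicator 1
        ((b : ℝ) ^ (M + j) * x) := by
    rw [Finset.card_filter, Finset.sum_Ico_eq_sum_range, add_tsub_cancel_left]
    push_cast
    simp only [bseq, indicator_apply, mem_preimage, mem_Ico, Pi.one_apply]
    congr!
  simp only [digitDeviation, Finset.sum_sub_distrib, Finset.sum_const, Finset.card_range,
    nsmul_eq_mul, Nat.cast_pow]
  rw [F, hcount, ← sub_div, add_sub_cancel_left, mul_comm]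

lemma F_bseq_le_sum_abs_deviationSum (hh : 0 < h) (M L : ℕ) (x : ℝ) :
    F M L (a / (b : ℝ) ^ h) ((a + 1) / (b : ℝ) ^ h) (bseq b x) ≤
      ∑ r ∈ Finset.range h,
        |deviationSum (b ^ h) a ((L - r) ⌈/⌉ h) ((b : ℝ) ^ (M + r) * x)| := by
  rw [F_bseq_eq_abs_sum, sum_range_eq_sum_residues hh]
  refine (Finset.abs_sum_le_sum_abs _ _).trans_eq (Finset.sum_congr rfl fun r _ => ?_)
  simp only [deviationSum, Nat.cast_pow, ← pow_mul, ← mul_assoc, ← pow_add]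
  ring_nf

lemma setOf_lt_F_subset (hh : 0 < h) (M L : ℕ) (y : ℝ) :
    {x | y < F M L (a / (b : ℝ) ^ h) ((a + 1) / (b : ℝ) ^ h) (bseq b x)} ⊆
      ⋃ r ∈ Finset.range h,
        {x | y / h ≤ |deviationSum (b ^ h) a ((L - r) ⌈/⌉ h) ((b : ℝ) ^ (M + r) * x)|} := by
  intro x hx
  have hh0 : (h : ℝ) ≠ 0 := by exact_mod_cast hh.ne'
  have hlt : ∑ _r ∈ Finset.range h, y / h < ∑ r ∈ Finset.range h,
      |deviationSum (b ^ h) a ((L - r) ⌈/⌉ h) ((b : ℝ) ^ (M + r) * x)| := by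
    rw [Finset.sum_const, Finset.card_range, nsmul_eq_mul, mul_div_cancel₀ _ hh0]
    exact lt_of_lt_of_le hx (F_bseq_le_sum_abs_deviationSum hh M L x)
  obtain ⟨r, hr, hyr⟩ := Finset.exists_lt_of_sum_lt hlt
  exact mem_biUnion hr hyr.le

lemma measureReal_le_abs_deviationSum_residue_le (hb : 0 < b) (hh : 0 < h) (ha : a < b ^ h)
    {q M : ℕ} (hqM : q ≤ M) (L r : ℕ) {u v : ℝ} (huv : u ≤ v) {n : ℤ}
    (hn : (b : ℝ) ^ q * (v - u) = n) {y : ℝ} (hy : 0 ≤ y) :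
    (volume.restrict (Icc u v)).real
        {x | y / h ≤ |deviationSum (b ^ h) a ((L - r) ⌈/⌉ h) ((b : ℝ) ^ (M + r) * x)|} ≤
      2 * (v - u) * Real.exp (-min (y ^ 2 * b ^ h / (4 * h * (L + h))) (y / h / 2)) := by
  have hb0 : (0 : ℝ) < b := by exact_mod_cast hb
  have hh0 : (0 : ℝ) < h := by exact_mod_cast hh
  obtain ⟨t, ht, htmin⟩ := exists_mem_Icc_quadratic_le
    (v := (L + h) / h / b ^ h) (y := y / h) (by positivity) (div_nonneg hy hh0.le)
  have hmin : (y / h) ^ 2 / (4 * ((L + h) / h / b ^ h)) =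
      y ^ 2 * b ^ h / (4 * h * (L + h)) := by
    field_simp
  rw [hmin] at htmin
  have hcell : (b : ℝ) ^ (M + r) * (v - u) = ((b ^ (M + r - q) * n : ℤ) : ℝ) := by
    rw [← Nat.sub_add_cancel (hqM.trans (Nat.le_add_right M r)), pow_add, mul_assoc, hn]
    push_cast [Nat.add_sub_cancel]
    rfl
  have hlength : (((L - r) ⌈/⌉ h : ℕ) : ℝ) / ((b ^ h : ℕ) : ℝ) ≤ (L + h) / h / b ^ h := by
    push_cast
    gcongr
    refine (natCast_ceilDiv_le hh).trans ?_
    gcongr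
    exact L.sub_le r
  refine (measureReal_le_abs_deviationSum_le ha _ ht (pow_ne_zero _ hb0.ne') huv hcell _).trans ?_
  refine mul_le_mul_of_nonneg_left (Real.exp_le_exp.2 (le_trans ?_ htmin)) ?_
  · gcongr
  · linarith

/-- A Bernstein inequality. Splitting the indices into residue classes modulo `h` turns the count
into `h` sums of independent terms. -/
lemma measureReal_lt_F_le (hb : 0 < b) (hh : 0 < h) (ha : a < b ^ h) {q M : ℕ} (hqM : q ≤ M)
    (L : ℕ) {u v : ℝ} (huv : u ≤ v) {n : ℤ} (hn : (b : ℝ) ^ q * (v - u) = n) {y : ℝ}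
    (hy : 0 ≤ y) :
    (volume.restrict (Icc u v)).real
        {x | y < F M L (a / (b : ℝ) ^ h) ((a + 1) / (b : ℝ) ^ h) (bseq b x)} ≤
      2 * h * (v - u) *
        Real.exp (-min (y ^ 2 * b ^ h / (4 * h * (L + h))) (y / h / 2)) := by
  set E := Real.exp (-min (y ^ 2 * b ^ h / (4 * h * (L + h))) (y / h / 2))
  calc (volume.restrict (Icc u v)).real _
      ≤ (volume.restrict (Icc u v)).real (⋃ r ∈ Finset.range h, _) :=
        measureReal_mono (setOf_lt_F_subset hh M L y) (measure_ne_top _ _)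
    _ ≤ ∑ r ∈ Finset.range h, (volume.restrict (Icc u v)).real _ :=
        measureReal_biUnion_finset_le _ _
    _ ≤ ∑ _r ∈ Finset.range h, 2 * (v - u) * E := Finset.sum_le_sum fun r _ =>
        measureReal_le_abs_deviationSum_residue_le hb hh ha hqM L r huv hn hy
    _ = 2 * h * (v - u) * E := by
        rw [Finset.sum_const, Finset.card_range, nsmul_eq_mul]
        ring

end Blocks

section Exponents

lemma pow_four_mul_le_two_pow (h : ℕ) : h ^ 4 * (7 + 6 * h) ≤ 1058 * 2 ^ h := by
  rcases lt_or_ge h 10 with hlt | hge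
  · interval_cases h <;> norm_num
  induction h, hge using Nat.le_induction with
  | base => norm_num
  | succ h hh ih =>
    have hratio : 10 * (h + 1) ≤ 11 * h := by omega
    have hpow : 10 ^ 4 * (h + 1) ^ 4 ≤ 11 ^ 4 * h ^ 4 := by
      simpa only [mul_pow] using Nat.pow_le_pow_left hratio 4
    have hlinear : 10 * (7 + 6 * (h + 1)) ≤ 11 * (7 + 6 * h) := by omega
    have hmul := Nat.mul_le_mul hpow hlinear
    rw [pow_succ 2 h]
    linarith [Nat.zero_le (h ^ 4 * (7 + 6 * h))]

lemma sq_mul_succ_pow_five_le_two_pow {l : ℕ} (hl : 38 ≤ l) :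
    256 * l ^ 2 * (l + 1) ^ 5 ≤ 1058 * 2 ^ l := by
  induction l, hl using Nat.le_induction with
  | base => norm_num
  | succ l hl ih =>
    have hsq : 19 ^ 2 * (l + 1) ^ 2 ≤ 20 ^ 2 * l ^ 2 := by
      simpa only [mul_pow] using Nat.pow_le_pow_left (by omega : 19 * (l + 1) ≤ 20 * l) 2
    have hfive : 19 ^ 5 * (l + 1 + 1) ^ 5 ≤ 20 ^ 5 * (l + 1) ^ 5 := by
      simpa only [mul_pow] using
        Nat.pow_le_pow_left (by omega : 19 * (l + 1 + 1) ≤ 20 * (l + 1)) 5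
    have hmul := Nat.mul_le_mul hsq hfive
    rw [pow_succ 2 l]
    linarith [Nat.zero_le (256 * l ^ 2 * (l + 1) ^ 5)]

lemma log_le_half {x : ℝ} (hx : 0 < x) : Real.log x ≤ x / 2 := by
  have hhalf := Real.log_le_sub_one_of_pos (half_pos hx)
  rw [Real.log_div hx.ne' two_ne_zero] at hhalf
  linarith [Real.log_two_lt_d9]

/-- Minus the logarithm of `2 ^ (-(b + 2 h + 2 s)) * b ^ (-h)`, which will bound the proportion of
points violating one of the conditions with base `b`, word length `h` and `s = n - ℓ + 1`. -/
noncomputable def failureExponent (b h s : ℕ) : ℝ :=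
  Real.log 2 * (b + 2 * h + 2 * s) + h * Real.log b

lemma exp_neg_failureExponent {b : ℕ} (hb : 0 < b) (h s : ℕ) :
    Real.exp (-failureExponent b h s) = (1 / 2) ^ (b + 2 * h + 2 * s) / (b : ℝ) ^ h := by
  have hb0 : (0 : ℝ) < b := by exact_mod_cast hb
  have hpow : Real.exp (failureExponent b h s) = 2 ^ (b + 2 * h + 2 * s) * (b : ℝ) ^ h := by
    rw [failureExponent, Real.exp_add, Real.exp_nat_mul, Real.exp_log hb0, mul_comm (Real.log 2)]
    rw [← Real.exp_log two_pos, ← Real.exp_nat_mul, Real.exp_log two_pos]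
    push_cast
    rfl
  rw [Real.exp_neg, hpow, mul_inv, one_div, inv_pow, div_eq_mul_inv]

variable {b h s : ℕ}

lemma failureExponent_le_mul (hb : 2 ≤ b) (hs : 1 ≤ s) :
    failureExponent b h s ≤ s * b * (7 + 6 * h) / 5 := by
  have hb' : (2 : ℝ) ≤ b := by exact_mod_cast hb
  have hs' : (1 : ℝ) ≤ s := by exact_mod_cast hs
  have hbs : (b : ℝ) ≤ s * b := le_mul_of_one_le_left (by linarith) hs'
  have hsb : (s : ℝ) * 2 ≤ s * b := by gcongr
  have hbsh : 2 * (h : ℝ) ≤ s * b * h := by gcongr; linarith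
  have hlog2 : Real.log 2 * (b + 2 * h + 2 * s) ≤ 7 / 10 * (b + 2 * h + 2 * s) := by
    gcongr
    linarith [Real.log_two_lt_d9]
  have hlogb : h * Real.log b ≤ s * b * h / 2 := by
    calc h * Real.log b ≤ h * (b / 2) := by gcongr; exact log_le_half (by linarith)
      _ ≤ h * (s * b / 2) := by gcongr
      _ = s * b * h / 2 := by ring
  rw [failureExponent]
  linarith

lemma failureExponent_le_quadratic (hb : 2 ≤ b) (hh : 1 ≤ h) (hs : 1 ≤ s) {L y : ℝ}
    (hL : 4 * h ≤ L) (hy : y ^ 2 = 2116 * L * s / h ^ 3) :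
    failureExponent b h s ≤ y ^ 2 * b ^ h / (4 * h * (L + h)) := by
  have hh0 : (0 : ℝ) < h := by exact_mod_cast hh
  have hL0 : 0 < L := by linarith
  have hpow : (b : ℝ) * 2 ^ h ≤ 2 * b ^ h := by
    obtain ⟨j, rfl⟩ := Nat.exists_eq_add_of_le hh
    have : (2 : ℝ) ≤ b := by exact_mod_cast hb
    calc (b : ℝ) * 2 ^ (1 + j) = 2 * (b * 2 ^ j) := by ring
      _ ≤ 2 * (b * b ^ j) := by gcongr
      _ = 2 * b ^ (1 + j) := by ring
  have hnum : (b : ℝ) * (h ^ 4 * (7 + 6 * h)) ≤ 2116 * b ^ h := by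
    calc (b : ℝ) * (h ^ 4 * (7 + 6 * h)) ≤ b * (1058 * 2 ^ h) :=
          mul_le_mul_of_nonneg_left (mod_cast pow_four_mul_le_two_pow h) b.cast_nonneg
      _ ≤ 2116 * b ^ h := by linarith
  calc failureExponent b h s ≤ s * b * (7 + 6 * h) / 5 := failureExponent_le_mul hb hs
    _ = s * (b * (h ^ 4 * (7 + 6 * h))) / (5 * h ^ 4) := by field_simp
    _ ≤ s * (2116 * b ^ h) / (5 * h ^ 4) := by gcongr
    _ = 2116 * L * s / h ^ 3 * b ^ h / (4 * h * (L + L / 4)) := by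
      field_simp
      ring
    _ ≤ y ^ 2 * b ^ h / (4 * h * (L + h)) := by
      rw [hy]
      gcongr
      linarith

variable {l : ℕ}

lemma failureExponent_le_eight_mul (hl : 38 ≤ l) (hb : 1 ≤ b) (hbl : b ≤ 3 * l) (hhl : h ≤ l + 1)
    (hsl : s ≤ l + 1) (hlog : h * Real.log b ≤ l * Real.log 2 + Real.log b) :
    failureExponent b h s ≤ 8 * l := by
  have hl' : (38 : ℝ) ≤ l := by exact_mod_cast hl
  have hb' : (1 : ℝ) ≤ b := by exact_mod_cast hb
  have hbl' : (b : ℝ) ≤ 3 * l := by exact_mod_cast hbl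
  have hhl' : (h : ℝ) ≤ l + 1 := by exact_mod_cast hhl
  have hsl' : (s : ℝ) ≤ l + 1 := by exact_mod_cast hsl
  have hlog2 : Real.log 2 * (b + 2 * h + 2 * s + l) ≤ 7 / 10 * (b + 2 * h + 2 * s + l) := by
    gcongr
    linarith [Real.log_two_lt_d9]
  rw [failureExponent]
  linarith [log_le_half (zero_lt_one.trans_le hb')]

lemma failureExponent_le_linear (hl : 38 ≤ l) (hb : 1 ≤ b) (hbl : b ≤ 3 * l) (hh : 1 ≤ h)
    (hhl : h ≤ l + 1) (hs : 1 ≤ s) (hsl : s ≤ l + 1)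
    (hlog : h * Real.log b ≤ l * Real.log 2 + Real.log b) {y : ℝ} (hy0 : 0 ≤ y)
    (hy : y ^ 2 = 2116 * 2 ^ (l - 1) * s / h ^ 3) :
    failureExponent b h s ≤ y / h / 2 := by
  have hh0 : (0 : ℝ) < h := by exact_mod_cast hh
  have hhl' : (h : ℝ) ≤ l + 1 := by exact_mod_cast hhl
  have hs' : (1 : ℝ) ≤ s := by exact_mod_cast hs
  have htwo : 2 * (2 : ℝ) ^ (l - 1) = 2 ^ l := mul_pow_sub_one (by omega) 2
  have hsq : (16 * (l : ℝ) * h) ^ 2 ≤ y ^ 2 := by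
    rw [hy, le_div_iff₀ (by positivity)]
    calc (16 * (l : ℝ) * h) ^ 2 * (h : ℝ) ^ 3 = 256 * (l : ℝ) ^ 2 * (h : ℝ) ^ 5 := by ring
      _ ≤ 256 * (l : ℝ) ^ 2 * ((l : ℝ) + 1) ^ 5 := by gcongr
      _ ≤ 1058 * (2 : ℝ) ^ l := by exact_mod_cast sq_mul_succ_pow_five_le_two_pow hl
      _ = 2116 * (2 : ℝ) ^ (l - 1) * 1 := by rw [← htwo]; ring
      _ ≤ 2116 * (2 : ℝ) ^ (l - 1) * s := by gcongr
  refine (failureExponent_le_eight_mul hl hb hbl hhl hsl hlog).trans ?_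
  rw [div_div, le_div_iff₀ (mul_pos hh0 two_pos)]
  linarith [le_of_sq_le_sq hsq hy0]

end Exponents

section Parameters

lemma mul_two_pow_add_le_two_pow {k : ℕ} (hk : 100 ≤ k) :
    k * (2 ^ (3 * k / 4) + 4 * k + 1) ≤ 2 ^ k := by
  obtain ⟨i, hi⟩ : ∃ i, 3 * k / 4 = i + 5 := ⟨3 * k / 4 - 5, by omega⟩
  obtain ⟨j, hj⟩ : ∃ j, k - 3 * k / 4 = j + 5 := ⟨k - 3 * k / 4 - 5, by omega⟩
  have hlinear : 4 * k + 1 ≤ 2 ^ (3 * k / 4) := by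
    have := i.lt_two_pow_self
    rw [hi, pow_add]
    omega
  have hquarter : 2 * k ≤ 2 ^ (k - 3 * k / 4) := by
    have := j.lt_two_pow_self
    rw [hj, pow_add]
    omega
  calc k * (2 ^ (3 * k / 4) + 4 * k + 1) ≤ k * (2 ^ (3 * k / 4) + 2 ^ (3 * k / 4)) := by
        rw [add_assoc]
        gcongr
    _ = 2 * k * 2 ^ (3 * k / 4) := by ring
    _ ≤ 2 ^ (k - 3 * k / 4) * 2 ^ (3 * k / 4) := by gcongr
    _ = 2 ^ k := by rw [← pow_add, Nat.sub_add_cancel (by omega)]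

variable {k b h l : ℕ}

lemma two_pow_div_le_two_pow_mul_log_div (hb : 2 ≤ b) (hbk : b ≤ k) :
    (2 : ℝ) ^ k / k ≤ 2 ^ k * Real.log 2 / Real.log b := by
  have hk0 : (0 : ℝ) < k := by exact_mod_cast two_pos.trans_le (hb.trans hbk)
  have hlog : Real.log b ≤ k * Real.log 2 := by
    rw [← Real.log_pow]
    exact Real.log_le_log (by positivity) (by exact_mod_cast hbk.trans k.lt_two_pow_self.le)
  rw [div_le_div_iff₀ hk0 (Real.log_pos (by exact_mod_cast hb)), mul_assoc, mul_comm (Real.log 2)]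
  gcongr

lemma two_pow_le_Nkb_succ_sub (hk : 100 ≤ k) (hb : 2 ≤ b) (hbk : b ≤ k) :
    (2 : ℝ) ^ (3 * k / 4) ≤ (Nkb b (k + 1) : ℝ) - Nkb b k - 4 * k := by
  have hsucc : (2 : ℝ) ^ (k + 1) * Real.log 2 / Real.log b ≤ Nkb b (k + 1) := Nat.le_ceil _
  have hself : (Nkb b k : ℝ) < 2 ^ k * Real.log 2 / Real.log b + 1 :=
    Nat.ceil_lt_add_one (by positivity)
  have hgap : (2 : ℝ) ^ (3 * k / 4) + 4 * k + 1 ≤ 2 ^ k / k := by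
    rw [le_div_iff₀' (by exact_mod_cast (by omega : 0 < k))]
    exact_mod_cast mul_two_pow_add_le_two_pow hk
  rw [pow_succ', mul_assoc, mul_div_assoc] at hsucc
  linarith [two_pow_div_le_two_pow_mul_log_div hb hbk]

lemma Nkb_succ_sub_le_two_pow (b k : ℕ) :
    (Nkb b (k + 1) : ℝ) - Nkb b k - 4 * k ≤ 2 ^ nkb b k := by
  rcases le_or_gt ((Nkb b (k + 1) : ℝ) - Nkb b k - 4 * k) 0 with hneg | hpos
  · exact hneg.trans (by positivity)
  · rw [← Real.rpow_natCast, ← Real.logb_le_iff_le_rpow one_lt_two hpos]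
    exact Nat.le_ceil _

lemma three_mul_div_four_le_nkb (hk : 100 ≤ k) (hb : 2 ≤ b) (hbk : b ≤ k) :
    3 * k / 4 ≤ nkb b k :=
  (pow_le_pow_iff_right₀ one_lt_two).1
    ((two_pow_le_Nkb_succ_sub hk hb hbk).trans (Nkb_succ_sub_le_two_pow b k))

lemma mul_log_le_of_le_Tbk (hb : 2 ≤ b) (hT : h ≤ Tbk b k) (hl : nkb b k ≤ 2 * l) :
    h * Real.log b ≤ l * Real.log 2 + Real.log b := by
  have hlogb : 0 < Real.log b := Real.log_pos (by exact_mod_cast hb)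
  have hlt : (h : ℝ) < nkb b k * Real.log 2 / (2 * Real.log b) + 1 :=
    (Nat.cast_le.2 hT).trans_lt (Nat.ceil_lt_add_one (by positivity))
  calc h * Real.log b ≤ (2 * l * Real.log 2 / (2 * Real.log b) + 1) * Real.log b := by
        gcongr
        refine hlt.le.trans ?_
        gcongr
        exact_mod_cast hl
    _ = l * Real.log 2 + Real.log b := by field_simp

lemma le_succ_of_le_Tbk (hb : 2 ≤ b) (hT : h ≤ Tbk b k) (hl : nkb b k ≤ 2 * l) : h ≤ l + 1 := by
  have hlogb : 0 < Real.log b := Real.log_pos (by exact_mod_cast hb)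
  have hmul : h * Real.log b ≤ (l + 1) * Real.log b := by
    calc h * Real.log b ≤ l * Real.log 2 + Real.log b := mul_log_le_of_le_Tbk hb hT hl
      _ ≤ l * Real.log b + Real.log b := by
        gcongr
        exact_mod_cast hb
      _ = (l + 1) * Real.log b := by ring
  exact_mod_cast le_of_mul_le_mul_right hmul hlogb

lemma two_pow_two_pow_le_pow_Nkb (hb : 2 ≤ b) (k : ℕ) : 2 ^ 2 ^ k ≤ b ^ Nkb b k := by
  have hlogb : 0 < Real.log b := Real.log_pos (by exact_mod_cast hb)
  have hceil : (2 : ℝ) ^ k * Real.log 2 / Real.log b ≤ Nkb b k := Nat.le_ceil _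
  have hreal : (2 : ℝ) ^ 2 ^ k ≤ (b : ℝ) ^ Nkb b k := by
    rw [← Real.log_le_log_iff (by positivity) (by positivity), Real.log_pow, Real.log_pow]
    exact_mod_cast (div_le_iff₀ hlogb).1 hceil
  exact_mod_cast hreal

lemma inv_pow_Nkb_le (hb : 2 ≤ b) (k : ℕ) :
    ((b : ENNReal) ^ (Nkb b k + 4 * k))⁻¹ ≤ 2⁻¹ ^ (2 ^ k + k) := by
  have hpow : 2 ^ (2 ^ k + k) ≤ b ^ (Nkb b k + 4 * k) := by
    rw [pow_add, pow_add]
    exact Nat.mul_le_mul (two_pow_two_pow_le_pow_Nkb hb k)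
      ((Nat.pow_le_pow_left hb k).trans (Nat.pow_le_pow_right (by omega) (by omega)))
  rw [← ENNReal.inv_pow, ENNReal.inv_le_inv]
  exact_mod_cast hpow

end Parameters

section UnionBound

/-- The discrepancy tolerated in `Hset` for word length `h` and blocks of length `2 ^ (l - 1)`, as a
function of `n = nkb b k`. -/
noncomputable def threshold (n h l : ℕ) : ℝ :=
  46 * (2 : ℝ) ^ (((l : ℝ) - 1) / 2) * (h : ℝ) ^ (-(3 / 2) : ℝ) * √((n : ℝ) - l + 1)

/-- The points violating the discrepancy condition with indices `h`, `a`, `ℓ = l`, `m`; `Hset b k A`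
is the union of the traces of these sets on `A`. -/
noncomputable def violationSet (b k h a l m : ℕ) : Set ℝ :=
  {x | threshold (nkb b k) h l < F (Nkb b k + 4 * k + m * 2 ^ l) (2 ^ (l - 1))
    (a / (b : ℝ) ^ h) ((a + 1) / (b : ℝ) ^ h) (bseq b x)}

lemma threshold_nonneg (n h l : ℕ) : 0 ≤ threshold n h l := by
  rw [threshold]
  positivity

lemma threshold_sq {n l : ℕ} (hl : 1 ≤ l) (hln : l ≤ n) (h : ℕ) :
    threshold n h l ^ 2 = 2116 * 2 ^ (l - 1) * (n - l + 1 : ℕ) / (h : ℝ) ^ 3 := by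
  have htwo : ((2 : ℝ) ^ (((l : ℝ) - 1) / 2)) ^ 2 = 2 ^ (l - 1) := by
    rw [← Real.rpow_mul_natCast zero_le_two, ← Real.rpow_natCast, Nat.cast_sub hl]
    norm_num
  have hword : ((h : ℝ) ^ (-(3 / 2) : ℝ)) ^ 2 = ((h : ℝ) ^ 3)⁻¹ := by
    rw [← Real.rpow_mul_natCast h.cast_nonneg, ← Real.rpow_natCast, ← Real.rpow_neg h.cast_nonneg]
    norm_num
  have hsqrt : √((n : ℝ) - l + 1) ^ 2 = (n - l + 1 : ℕ) := by
    rw [← Nat.cast_sub hln, ← Nat.cast_add_one, Real.sq_sqrt (Nat.cast_nonneg _)]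
  rw [threshold, mul_pow, mul_pow, mul_pow, htwo, hword, hsqrt]
  ring

lemma Hset_subset (b k : ℕ) (A : Set ℝ) :
    Hset b k A ⊆ ⋃ h ∈ Finset.Icc 1 (Tbk b k), ⋃ a ∈ Finset.range (b ^ h),
      ⋃ d ∈ Finset.range (nkb b k / 2 + 1), ⋃ m ∈ Finset.range (2 ^ d),
        violationSet b k h a (nkb b k - d) m := by
  intro x hx
  simp only [Hset, mem_iUnion] at hx
  obtain ⟨h, hh, hT, a, ha, l, hl, hln, m, hm, -, hxF⟩ := hx
  have hlength : Nkb b (k + 1) ≤ 2 ^ nkb b k + Nkb b k + 4 * k := by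
    have hreal : (Nkb b (k + 1) : ℝ) ≤ 2 ^ nkb b k + Nkb b k + 4 * k := by
      linarith [Nkb_succ_sub_le_two_pow b k]
    exact_mod_cast hreal
  have hblock : m < 2 ^ (nkb b k - l) := by
    have hmul : m * 2 ^ l < 2 ^ (nkb b k - l) * 2 ^ l := by
      rw [← pow_add, Nat.sub_add_cancel hln]
      have := Nat.two_pow_pos (l - 1)
      omega
    exact lt_of_mul_lt_mul_right hmul (Nat.zero_le _)
  simp only [mem_iUnion, Finset.mem_Icc, Finset.mem_range]
  refine ⟨h, ⟨hh, hT⟩, a, ha, nkb b k - l, by omega, m, hblock, ?_⟩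
  rw [Nat.sub_sub_self hln]
  exact hxF

lemma sum_mul_one_quarter_pow_le (s : Finset ℕ) :
    ∑ h ∈ s, (h : ℝ) * (1 / 4) ^ h ≤ 1 / 2 := by
  have hsum := hasSum_coe_mul_geometric_of_norm_lt_one (r := (1 / 4 : ℝ)) (by norm_num)
  refine (sum_le_hasSum s (fun h _ => by positivity) hsum).trans ?_
  norm_num

variable {b k h a l : ℕ} {u v : ℝ} {n : ℤ}

lemma measureReal_violationSet_le (hk : 100 ≤ k) (hb : 2 ≤ b) (hbk : b ≤ k) (hh : 1 ≤ h)
    (hT : h ≤ Tbk b k) (ha : a < b ^ h) (hl : nkb b k ≤ 2 * l) (hln : l ≤ nkb b k) (m : ℕ)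
    (huv : u ≤ v) (hn : (b : ℝ) ^ (Nkb b k + 4 * k) * (v - u) = n) :
    (volume.restrict (Icc u v)).real (violationSet b k h a l m) ≤
      2 * h * (v - u) * ((1 / 2) ^ (b + 2 * h + 2 * (nkb b k - l + 1)) / (b : ℝ) ^ h) := by
  have hnkb := three_mul_div_four_le_nkb hk hb hbk
  have hhl := le_succ_of_le_Tbk hb hT hl
  have hy0 := threshold_nonneg (nkb b k) h l
  have hysq := threshold_sq (by omega) hln h
  have hL : 4 * (h : ℝ) ≤ 2 ^ (l - 1) := by
    have hlt : l - 1 - 5 < 2 ^ (l - 1 - 5) := Nat.lt_two_pow_self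
    have hpow : 2 ^ (l - 1 - 5) * 2 ^ 5 = 2 ^ (l - 1) := pow_sub_mul_pow 2 (by omega)
    exact_mod_cast (by omega : 4 * h ≤ 2 ^ (l - 1))
  have hexponent : failureExponent b h (nkb b k - l + 1) ≤
      min (threshold (nkb b k) h l ^ 2 * b ^ h / (4 * h * (2 ^ (l - 1) + h)))
        (threshold (nkb b k) h l / h / 2) :=
    le_min (failureExponent_le_quadratic hb hh (by omega) hL hysq)
      (failureExponent_le_linear (by omega) (by omega) (by omega) hh hhl (by omega) (by omega)
        (mul_log_le_of_le_Tbk hb hT hl) hy0 hysq)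
  have hbernstein := measureReal_lt_F_le (by omega) hh ha (Nat.le_add_right _ (m * 2 ^ l))
    (2 ^ (l - 1)) huv hn hy0
  push_cast at hbernstein
  refine hbernstein.trans ?_
  rw [← exp_neg_failureExponent (by omega)]
  have := sub_nonneg.2 huv
  gcongr

lemma measureReal_biUnion_range_violationSet_le (hk : 100 ≤ k) (hb : 2 ≤ b) (hbk : b ≤ k)
    (hh : 1 ≤ h) (hT : h ≤ Tbk b k) (ha : a < b ^ h) {d : ℕ} (hd : 2 * d ≤ nkb b k) (huv : u ≤ v)
    (hn : (b : ℝ) ^ (Nkb b k + 4 * k) * (v - u) = n) :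
    (volume.restrict (Icc u v)).real
        (⋃ m ∈ Finset.range (2 ^ d), violationSet b k h a (nkb b k - d) m) ≤
      (1 / 2) ^ b * (v - u) * (h * (1 / 4) ^ h) / b ^ h / 2 * (1 / 2) ^ d := by
  have hsub : nkb b k - (nkb b k - d) = d := by omega
  calc (volume.restrict (Icc u v)).real _
      ≤ ∑ m ∈ Finset.range (2 ^ d), (volume.restrict (Icc u v)).real _ :=
        measureReal_biUnion_finset_le _ _
    _ ≤ ∑ _m ∈ Finset.range (2 ^ d),
          2 * h * (v - u) * ((1 / 2) ^ (b + 2 * h + 2 * (d + 1)) / (b : ℝ) ^ h) := by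
        refine Finset.sum_le_sum fun m _ => ?_
        have hviolation := measureReal_violationSet_le hk hb hbk hh hT ha (l := nkb b k - d)
          (by omega) (by omega) m huv hn
        rwa [hsub] at hviolation
    _ = (1 / 2) ^ b * (v - u) * (h * (1 / 4) ^ h) / b ^ h / 2 * (2 ^ d * (1 / 4) ^ d) := by
        rw [Finset.sum_const, Finset.card_range, nsmul_eq_mul, pow_add, pow_add, pow_mul,
          pow_mul _ 2 (d + 1), pow_succ]
        push_cast
        ring
    _ = (1 / 2) ^ b * (v - u) * (h * (1 / 4) ^ h) / b ^ h / 2 * (1 / 2) ^ d := by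
        rw [← mul_pow]
        norm_num

lemma measureReal_biUnion_violationSet_le (hk : 100 ≤ k) (hb : 2 ≤ b) (hbk : b ≤ k) (hh : 1 ≤ h)
    (hT : h ≤ Tbk b k) (ha : a < b ^ h) (huv : u ≤ v)
    (hn : (b : ℝ) ^ (Nkb b k + 4 * k) * (v - u) = n) :
    (volume.restrict (Icc u v)).real (⋃ d ∈ Finset.range (nkb b k / 2 + 1),
        ⋃ m ∈ Finset.range (2 ^ d), violationSet b k h a (nkb b k - d) m) ≤
      (1 / 2) ^ b * (v - u) * (h * (1 / 4) ^ h) / b ^ h := by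
  set C := (1 / 2) ^ b * (v - u) * (h * (1 / 4) ^ h) / (b : ℝ) ^ h
  have hC : 0 ≤ C / 2 := by
    have := sub_nonneg.2 huv
    positivity
  calc (volume.restrict (Icc u v)).real _
      ≤ ∑ d ∈ Finset.range (nkb b k / 2 + 1), (volume.restrict (Icc u v)).real _ :=
        measureReal_biUnion_finset_le _ _
    _ ≤ ∑ d ∈ Finset.range (nkb b k / 2 + 1), C / 2 * (1 / 2) ^ d := by
        refine Finset.sum_le_sum fun d hd => ?_
        rw [Finset.mem_range] at hd
        exact measureReal_biUnion_range_violationSet_le hk hb hbk hh hT ha (by omega) huv hn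
    _ ≤ C / 2 * 2 := by
        rw [← Finset.mul_sum]
        exact mul_le_mul_of_nonneg_left (sum_geometric_two_le _) hC
    _ = C := by ring

lemma measureReal_Hset_le (hk : 100 ≤ k) (hb : 2 ≤ b) (hbk : b ≤ k) (A : Set ℝ) (huv : u ≤ v)
    (hn : (b : ℝ) ^ (Nkb b k + 4 * k) * (v - u) = n) :
    (volume.restrict (Icc u v)).real (Hset b k A) ≤ (1 / 2) ^ b * ((v - u) / 2) := by
  have hb0 : (b : ℝ) ≠ 0 := by exact_mod_cast (by omega : b ≠ 0)
  calc (volume.restrict (Icc u v)).real (Hset b k A)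
      ≤ (volume.restrict (Icc u v)).real (⋃ h ∈ Finset.Icc 1 (Tbk b k), _) :=
        measureReal_mono (Hset_subset b k A) (measure_ne_top _ _)
    _ ≤ ∑ h ∈ Finset.Icc 1 (Tbk b k), (volume.restrict (Icc u v)).real _ :=
        measureReal_biUnion_finset_le _ _
    _ ≤ ∑ h ∈ Finset.Icc 1 (Tbk b k), ∑ a ∈ Finset.range (b ^ h),
          (volume.restrict (Icc u v)).real _ :=
        Finset.sum_le_sum fun h _ => measureReal_biUnion_finset_le _ _
    _ ≤ ∑ h ∈ Finset.Icc 1 (Tbk b k), ∑ _a ∈ Finset.range (b ^ h),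
          (1 / 2) ^ b * (v - u) * (h * (1 / 4) ^ h) / (b : ℝ) ^ h := by
        refine Finset.sum_le_sum fun h hh => Finset.sum_le_sum fun a ha => ?_
        rw [Finset.mem_Icc] at hh
        exact measureReal_biUnion_violationSet_le hk hb hbk hh.1 hh.2 (Finset.mem_range.1 ha) huv hn
    _ = (1 / 2) ^ b * (v - u) * ∑ h ∈ Finset.Icc 1 (Tbk b k), (h : ℝ) * (1 / 4) ^ h := by
        rw [Finset.mul_sum]
        refine Finset.sum_congr rfl fun h _ => ?_
        rw [Finset.sum_const, Finset.card_range, nsmul_eq_mul, Nat.cast_pow,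
          mul_div_cancel₀ _ (pow_ne_zero h hb0)]
    _ ≤ (1 / 2) ^ b * (v - u) * (1 / 2) := by
        have := sub_nonneg.2 huv
        gcongr
        exact sum_mul_one_quarter_pow_le _
    _ = (1 / 2) ^ b * ((v - u) / 2) := by ring

end UnionBound

section Intervals

lemma volume_Hset_le_of_subset_Icc {k b : ℕ} (hk : 100 ≤ k) (hb : 2 ≤ b) (hbk : b ≤ k)
    {A : Set ℝ} {u v : ℝ} (hA : A ⊆ Icc u v) (huv : u ≤ v) {n : ℤ}
    (hn : (b : ℝ) ^ (Nkb b k + 4 * k) * (v - u) = n) :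
    volume (Hset b k A) ≤ ENNReal.ofReal ((1 / 2) ^ b * ((v - u) / 2)) := by
  have hHset : Hset b k A ⊆ Icc u v := by
    simp only [Hset, iUnion_subset_iff]
    exact fun h _ _ a _ l _ _ m _ x hx => hA hx.1
  rw [← Measure.restrict_eq_self volume hHset, ← ofReal_measureReal (measure_ne_top _ _)]
  exact ENNReal.ofReal_le_ofReal (measureReal_Hset_le hk hb hbk A huv hn)

lemma exists_subset_Icc_of_inv_le {A : Set ℝ} (hA : A.OrdConnected) (hfin : volume A ≠ ⊤) {Q : ℝ}
    (hQ : 0 < Q) (hle : Q⁻¹ ≤ volume.real A) :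
    ∃ u v : ℝ, ∃ n : ℤ,
      A ⊆ Icc u v ∧ u ≤ v ∧ Q * (v - u) = n ∧ (v - u) / 2 ≤ volume.real A := by
  obtain ⟨u, hu⟩ := exists_subset_Icc_of_ordConnected hA hfin
  have hlower : volume.real A ≤ ⌈Q * volume.real A⌉ / Q :=
    (le_div_iff₀' hQ).2 (Int.le_ceil _)
  have hupper : ⌈Q * volume.real A⌉ / Q ≤ volume.real A + Q⁻¹ := by
    rw [div_le_iff₀' hQ, mul_add, mul_inv_cancel₀ hQ.ne']
    exact (Int.ceil_lt_add_one _).le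
  refine ⟨u, u + ⌈Q * volume.real A⌉ / Q, ⌈Q * volume.real A⌉,
    hu.trans (Icc_subset_Icc_right (by gcongr)), ?_, ?_, ?_⟩
  · linarith [measureReal_nonneg (μ := volume) (s := A)]
  · rw [add_sub_cancel_left, mul_div_cancel₀ _ hQ.ne']
  · linarith

end Intervals

theorem stmt11_general (k b : ℕ) (hk : 100 ≤ k) (hb : 2 ≤ b) (hbk : b ≤ k) (A : Set ℝ)
    (hA : A.OrdConnected) (hμ : ((b : ENNReal) ^ (Nkb b k + 4 * k))⁻¹ ≤ volume A) :
    volume (Hset b k A) ≤ (2⁻¹ : ENNReal) ^ b * volume A := by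
  rcases eq_or_ne (volume A) ⊤ with htop | hfin
  · simp [htop]
  have hlength : ((b : ℝ) ^ (Nkb b k + 4 * k))⁻¹ ≤ volume.real A := by
    simpa [Measure.real] using ENNReal.toReal_mono hfin hμ
  have hb0 : (0 : ℝ) < b := by exact_mod_cast (by omega : 0 < b)
  obtain ⟨u, v, n, huv_sub, huv, hn, hhalf⟩ :=
    exists_subset_Icc_of_inv_le hA hfin (pow_pos hb0 _) hlength
  calc volume (Hset b k A) ≤ ENNReal.ofReal ((1 / 2) ^ b * ((v - u) / 2)) :=
        volume_Hset_le_of_subset_Icc hk hb hbk huv_sub huv hn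
    _ ≤ ENNReal.ofReal ((1 / 2) ^ b * volume.real A) := by gcongr
    _ = 2⁻¹ ^ b * volume A := by
        rw [ENNReal.ofReal_mul (by positivity), ofReal_measureReal hfin,
          ENNReal.ofReal_pow (by positivity), one_div, ENNReal.ofReal_inv_of_pos two_pos,
          ENNReal.ofReal_ofNat]

theorem stmt11 (k b : ℕ) (hk : 100 ≤ k) (hb : 2 ≤ b) (hbk : b ≤ k)
    (A : Set ℝ) (hA : A ⊆ Set.Icc (0 : ℝ) 1) (hA' : A.OrdConnected)
    (hμ : (2⁻¹ : ENNReal) ^ (2 ^ k + k) ≤ MeasureTheory.volume A) :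
    MeasureTheory.volume (Hset b k A) ≤ (2⁻¹ : ENNReal) ^ b * MeasureTheory.volume A := by
  exact stmt11_general k b hk hb hbk A hA' ((inv_pow_Nkb_le hb k).trans hμ)
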